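/- arXiv:1506.08376 — 2 statements merged into one kernel-verified Lean document; each statement's English description precedes it below -/
import Mathlib

section
/- Let K be an algebraically closed field and n a natural number. Every maximal ideal M of the polynomial ring K[x₁, x₂, ..., xₙ] is of the form M = (x₁ − a₁, x₂ − a₂, ..., xₙ − aₙ) for some a₁, ..., aₙ ∈ K. -/
open MvPolynomial

/-- Every polynomial is congruent to its value at `a` modulo `(x₁ - a₁, …, xₙ - aₙ)`. -/
theorem sub_C_eval_mem_span {K : Type*} [Field K] {n : ℕ} (a : Fin n → K)
    (p : MvPolynomial (Fin n) K) :
    p - C (eval a p) ∈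
      Ideal.span (Set.range fun i : Fin n => (X i : MvPolynomial (Fin n) K) - C (a i)) := by
  induction p using MvPolynomial.induction_on with
  | C r => simp
  | add p q hp hq =>
    have h := Ideal.add_mem _ hp hq
    convert h using 1
    simp only [map_add]
    ring
  | mul_X p i hp =>
    have hi : (X i : MvPolynomial (Fin n) K) - C (a i) ∈
        Ideal.span (Set.range fun i : Fin n => (X i : MvPolynomial (Fin n) K) - C (a i)) :=
      Ideal.subset_span ⟨i, rfl⟩
    have h := Ideal.add_mem _ (Ideal.mul_mem_left _ p hi) (Ideal.mul_mem_left _ (C (a i)) hp)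
    convert h using 1
    simp only [map_mul, eval_X]
    ring

/-- Hilbert's Nullstellensatz (weak form): over an algebraically closed field `K`,
every maximal ideal of `K[x₁, …, xₙ]` has the form `(x₁ - a₁, …, xₙ - aₙ)`. -/
theorem nullstellensatz_weak (K : Type*) [Field K] [IsAlgClosed K] (n : ℕ)
    (M : Ideal (MvPolynomial (Fin n) K)) (hM : M.IsMaximal) :
    ∃ a : Fin n → K,
      M = Ideal.span (Set.range fun i : Fin n => (X i : MvPolynomial (Fin n) K) - C (a i)) := by
  obtain ⟨a, rfl⟩ := eq_vanishingIdeal_singleton_of_isMaximal K hM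
  refine ⟨a, le_antisymm ?_ ?_⟩
  · intro p hp
    rw [mem_vanishingIdeal_singleton_iff, aeval_eq_eval] at hp
    have h := sub_C_eval_mem_span a p
    have hp' : eval a p = 0 := hp
    rwa [hp', map_zero, sub_zero] at h
  · rw [Ideal.span_le]
    rintro _ ⟨i, rfl⟩
    simp [mem_vanishingIdeal_singleton_iff]
end

section
/- Let D be a principal ideal domain possessing infinitely many pairwise non-associate prime elements. Then the field of fractions of D is not a finitely generated D-algebra. -/
/-- A PID with infinitely many pairwise non-associate prime elements has a
fraction field which is not a finitely generated algebra over it. -/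
theorem fractionRing_not_finiteType_of_infinitely_many_primes
    (D : Type*) [CommRing D] [IsDomain D] [IsPrincipalIdealRing D]
    (S : Set D) (hS : S.Infinite) (hprime : ∀ p ∈ S, Prime p)
    (hnassoc : ∀ p ∈ S, ∀ q ∈ S, p ≠ q → ¬ Associated p q) :
    ¬ Algebra.FiniteType D (FractionRing D) := by
  rintro ⟨s, hs⟩
  obtain ⟨⟨b, hb⟩, hbs⟩ :=
    IsLocalization.exist_integer_multiples_of_finset (nonZeroDivisors D) s
  have hb0 : b ≠ 0 := nonZeroDivisors.ne_zero hb
  have key : ∀ x ∈ Algebra.adjoin D (s : Set (FractionRing D)),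
      ∃ n : ℕ, ∃ a : D, algebraMap D (FractionRing D) b ^ n * x = algebraMap D _ a := by
    intro x hx
    induction hx using Algebra.adjoin_induction with
    | mem x hx =>
      obtain ⟨a, ha⟩ := hbs x hx
      refine ⟨1, a, ?_⟩
      rw [ha, pow_one, Algebra.smul_def]
    | algebraMap r => exact ⟨0, r, by simp⟩
    | add x y _ _ hx hy =>
      obtain ⟨n, a, ha⟩ := hx
      obtain ⟨m, c, hc⟩ := hy
      refine ⟨n + m, b ^ m * a + b ^ n * c, ?_⟩
      simp only [map_add, map_mul, map_pow, ← ha, ← hc]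
      ring
    | mul x y _ _ hx hy =>
      obtain ⟨n, a, ha⟩ := hx
      obtain ⟨m, c, hc⟩ := hy
      refine ⟨n + m, a * c, ?_⟩
      simp only [map_mul, ← ha, ← hc]
      ring
  have hdvd : ∀ p ∈ S, p ∣ b := by
    intro p hp
    obtain ⟨n, a, ha⟩ := key (algebraMap D (FractionRing D) p)⁻¹ (by rw [hs]; trivial)
    have hp0 : algebraMap D (FractionRing D) p ≠ 0 := by
      simpa using (hprime p hp).ne_zero
    have h2 : b ^ n = a * p := by
      apply IsFractionRing.injective D (FractionRing D)
      rw [map_mul, map_pow, ← ha, mul_assoc, inv_mul_cancel₀ hp0, mul_one]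
    exact (hprime p hp).dvd_of_dvd_pow (n := n) ⟨a, by rw [h2, mul_comm]⟩
  have hex : ∀ p : D, ∃ q : D, p ∈ S →
      q ∈ UniqueFactorizationMonoid.factors b ∧ Associated p q := by
    intro p
    by_cases hp : p ∈ S
    · obtain ⟨q, hq, h⟩ := UniqueFactorizationMonoid.exists_mem_factors_of_dvd hb0
        (hprime p hp).irreducible (hdvd p hp)
      exact ⟨q, fun _ => ⟨hq, h⟩⟩
    · exact ⟨0, fun h => absurd h hp⟩
  choose f hf using hex
  refine Set.infinite_of_injOn_mapsTo (f := f)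
    (t := {q | q ∈ UniqueFactorizationMonoid.factors b}) ?_ ?_ hS ?_
  · intro p hp q hq h
    by_contra hne
    exact hnassoc p hp q hq hne ((hf p hp).2.trans (h ▸ (hf q hq).2.symm))
  · exact fun p hp => (hf p hp).1
  · classical
    exact (UniqueFactorizationMonoid.factors b).toFinset.finite_toSet.subset
      (fun q hq => by simpa using hq)
end
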